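/- arXiv:2512.08364 — 3 statements merged into one kernel-verified Lean document; each statement's English description precedes it below -/
import Mathlib

section
/- Let d ∈ ℕ, let ρ*(t) = 1 + 2·cos( (1/3)·arccos(2t−1) + 4π/3 ), let ρ_d*(t) = ∏_{j=1}^d ρ*(t_j) on [0,1]^d, let t_1,…,t_N be i.i.d. with law ρ_d*(t)dt, and use weights a_k = 1/(N ρ_d*(t_k)). Then limsup_{N→∞} N^{1/2} · 2^d · E[∫_{[0,1]^d} |Δ(x)| dx] ≤ √(2/π) · (3/2)^{d/2}. -/
open MeasureTheory Filter

namespace LD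
open ProbabilityTheory

lemma abs_gauss1 : ∫ z, |z| ∂(gaussianReal 0 1) = √(2 / Real.pi) := by
  rw [integral_gaussianReal_eq_integral_smul one_ne_zero]
  have h : ∀ x : ℝ, gaussianPDFReal 0 1 x • |x| =
      (fun y : ℝ => (√(2 * Real.pi))⁻¹ * (y ^ (1:ℝ) * Real.exp (-(1/2) * y ^ (2:ℝ)))) |x| := by
    intro x
    simp [gaussianPDFReal]
    ring_nf
  rw [integral_congr_ae (Eventually.of_forall h), integral_comp_abs (f := fun y : ℝ =>
      (√(2 * Real.pi))⁻¹ * (y ^ (1:ℝ) * Real.exp (-(1/2) * y ^ (2:ℝ)))), integral_const_mul,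
    integral_rpow_mul_exp_neg_mul_rpow (by norm_num) (by norm_num) (by norm_num)]
  norm_num [Real.rpow_neg_one]
  have h2 : √2 * √2 = 2 := Real.mul_self_sqrt (by norm_num)
  have hp : 0 < √Real.pi := Real.sqrt_pos.2 Real.pi_pos
  field_simp
  nlinarith

lemma abs_gauss (v : NNReal) : ∫ z, |z| ∂(gaussianReal 0 v) = √(2 / Real.pi) * √v := by
  have h := gaussianReal_map_const_mul (μ := 0) (v := 1) (√v)
  have h2 : (NNReal.mk ((√(v:ℝ)) ^ 2) (sq_nonneg _) * 1 : NNReal) = v := by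
    ext; simp
  rw [mul_zero, h2] at h
  rw [← h, integral_map (by fun_prop) (by fun_prop)]
  simp_rw [abs_mul, integral_const_mul, abs_gauss1]
  rw [abs_of_nonneg (Real.sqrt_nonneg _), mul_comm]

lemma int_abs_le {Ω : Type*} [MeasurableSpace Ω] {P : Measure Ω} [IsProbabilityMeasure P]
    {W : Ω → ℝ} (hW : MemLp W 2 P) : ∫ ω, |W ω| ∂P ≤ √(∫ ω, W ω ^ 2 ∂P) := by
  apply Real.le_sqrt_of_sq_le
  have h := variance_eq_sub hW.abs
  have h0 := variance_nonneg |W| P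
  simp at h
  linarith

section
variable {E : Type*} [MeasurableSpace E] (Q : Measure E) [IsProbabilityMeasure Q]
  (Y : E → ℝ)

/-- normalised sum -/
noncomputable def W (N : ℕ) (T : Fin N → E) : ℝ :=
  (√N)⁻¹ * (∑ k, Y (T k) - N * ∫ t, Y t ∂Q)

variable {Y}

lemma memLp_eval (hL : MemLp Y 2 Q) {N : ℕ} (k : Fin N) :
    MemLp (fun T : Fin N → E => Y (T k)) 2 (Measure.pi fun _ : Fin N => Q) :=
  hL.comp_measurePreserving (measurePreserving_eval (fun _ : Fin N => Q) k)

lemma memLp_W (hL : MemLp Y 2 Q) (N : ℕ) :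
    MemLp (W Q Y N) 2 (Measure.pi fun _ : Fin N => Q) := by
  unfold W
  apply MemLp.const_mul
  apply MemLp.sub _ (memLp_const _)
  exact memLp_finsetSum _ fun k _ => memLp_eval Q hL k

lemma int_W_sq (hL : MemLp Y 2 Q) (N : ℕ) :
    ∫ T, W Q Y N T ^ 2 ∂(Measure.pi fun _ : Fin N => Q) ≤ Var[Y; Q] := by
  have h1 := variance_sum_pi (μ := fun _ : Fin N => Q) (X := fun _ => Y) (fun _ => hL)
  have hS : MemLp (∑ k : Fin N, fun T : Fin N → E => Y (T k)) 2 (Measure.pi fun _ : Fin N => Q) :=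
    memLp_finsetSum' _ fun k _ => memLp_eval Q hL k
  rw [variance_eq_integral hS.aestronglyMeasurable.aemeasurable] at h1
  have hm : ∫ T, (∑ k : Fin N, fun T : Fin N → E => Y (T k)) T ∂(Measure.pi fun _ : Fin N => Q)
      = N * ∫ t, Y t ∂Q := by
    simp only [Finset.sum_apply]
    rw [integral_finsetSum _ fun k _ => (memLp_eval Q hL k).integrable (by norm_num)]
    have : ∀ k : Fin N, ∫ T, Y (T k) ∂(Measure.pi fun _ : Fin N => Q) = ∫ t, Y t ∂Q := by
      intro k
      have := measurePreserving_eval (fun _ : Fin N => Q) k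
      conv_rhs => rw [← this.map_eq]
      rw [integral_map this.measurable.aemeasurable]
      · rw [this.map_eq]; exact hL.aestronglyMeasurable
    simp [this]
  rw [hm] at h1
  simp only [Finset.sum_apply, Finset.sum_const, Finset.card_univ, Fintype.card_fin,
    nsmul_eq_mul] at h1
  simp only [W, mul_pow, integral_const_mul]
  rw [h1]
  rcases Nat.eq_zero_or_pos N with rfl | hN
  · simp [variance_nonneg]
  · have : (0:ℝ) < N := by exact_mod_cast hN
    rw [inv_pow, Real.sq_sqrt this.le]
    apply le_of_eq
    field_simp

lemma int_abs_W_le (hL : MemLp Y 2 Q) (N : ℕ) :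
    ∫ T, |W Q Y N T| ∂(Measure.pi fun _ : Fin N => Q) ≤ √Var[Y; Q] :=
  (int_abs_le (memLp_W Q hL N)).trans (Real.sqrt_le_sqrt (int_W_sq Q hL N))

lemma int_min_W (hY : Measurable Y) (hL : MemLp Y 2 Q) {M : ℝ} (hM : 0 < M) :
    Tendsto (fun N => ∫ T, min |W Q Y N T| M ∂(Measure.pi fun _ : Fin N => Q)) atTop
      (nhds (∫ z, min |z| M ∂(gaussianReal 0 Var[Y; Q].toNNReal))) := by
  set P := Measure.infinitePi fun _ : ℕ => Q
  let X : ℕ → (ℕ → E) → ℝ := fun k ω => Y (ω k)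
  have hev : ∀ k : ℕ, MeasurePreserving (fun ω : ℕ → E => ω k) P Q :=
    fun k => measurePreserving_eval_infinitePi (fun _ : ℕ => Q) k
  have hindep : iIndepFun X P := iIndepFun_infinitePi (fun _ => hY)
  have hmap : ∀ k, P.map (X k) = Q.map Y := by
    intro k
    change P.map (Y ∘ fun ω => ω k) = _
    rw [← Measure.map_map hY (hev k).measurable, (hev k).map_eq]
  have hXm : ∀ k, Measurable (X k) := fun k => hY.comp (hev k).measurable
  have hident : ∀ i, IdentDistrib (X i) (X 0) P P := fun i =>
    ⟨(hXm i).aemeasurable, (hXm 0).aemeasurable, by rw [hmap, hmap]⟩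
  have hX2 : MemLp (X 0) 2 P := hL.comp_measurePreserving (hev 0)
  have hYX : IdentDistrib (X 0) Y P Q := ⟨(hXm 0).aemeasurable, hY.aemeasurable, hmap 0⟩
  have hclt := tendstoInDistribution_inv_sqrt_mul_sum_sub
    (Y := id) (P' := gaussianReal 0 Var[X 0; P].toNNReal) HasLaw.id hX2 hindep hident
  have ht := ProbabilityMeasure.tendsto_iff_forall_integral_tendsto.1 hclt.tendsto
    (BoundedContinuousFunction.ofNormedAddCommGroup (fun z : ℝ => min |z| M) (by fun_prop) M
      (by intro x; rw [Real.norm_of_nonneg (by positivity)]; exact min_le_right _ _))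
  simp only [ProbabilityMeasure.coe_mk, BoundedContinuousFunction.coe_ofNormedAddCommGroup,
    Measure.map_id] at ht
  rw [hYX.variance_eq, hYX.integral_eq] at ht
  refine ht.congr fun N => ?_
  rw [integral_map (by fun_prop) (by fun_prop)]
  have hr := Measure.map_infinitePi_infinitePi_of_inj (P := fun _ : ℕ => Q)
    (f := fun k : Fin N => (k : ℕ)) Fin.val_injective
  rw [Measure.infinitePi_eq_pi (μ := fun _ : Fin N => Q)] at hr
  rw [← hr, integral_map (measurable_pi_lambda _ fun i => measurable_pi_apply _).aemeasurable]
  · simp only [W, X, Finset.sum_range]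
    rfl
  · unfold W
    exact Measurable.aestronglyMeasurable (by fun_prop)

lemma limsup_W (hY : Measurable Y) (hL : MemLp Y 2 Q) {ε : ℝ} (hε : 0 < ε) :
    ∀ᶠ N in atTop, ∫ T, |W Q Y N T| ∂(Measure.pi fun _ : Fin N => Q) ≤
      √(2 / Real.pi) * √Var[Y; Q] + ε := by
  set v := Var[Y; Q]
  have hv : 0 ≤ v := variance_nonneg _ _
  set M := 2 * (v + 1) / ε with hMdef
  have hM : 0 < M := by positivity
  have hlim := int_min_W Q hY hL hM
  have hg : ∫ z, min |z| M ∂(gaussianReal 0 v.toNNReal) ≤ √(2 / Real.pi) * √v := by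
    have := abs_gauss v.toNNReal
    rw [Real.coe_toNNReal _ hv] at this
    rw [← this]
    apply integral_mono_of_nonneg
    · exact Eventually.of_forall fun z => by positivity
    · have := (memLp_id_gaussianReal (μ := 0) (v := v.toNNReal) 1).integrable (by norm_num)
      exact this.abs
    · exact Eventually.of_forall fun z => min_le_left _ _
  filter_upwards [hlim.eventually_lt_const (u := √(2 / Real.pi) * √v + ε / 2) (by linarith)]
    with N hN
  have hW := memLp_W Q hL N
  have hWi : Integrable (W Q Y N) _ := hW.integrable (by norm_num)
  have hmin : Integrable (fun T => min |W Q Y N T| M) (Measure.pi fun _ : Fin N => Q) :=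
    hWi.abs.inf (integrable_const M)
  have hsq : Integrable (fun T => W Q Y N T ^ 2 / M) (Measure.pi fun _ : Fin N => Q) :=
    hW.integrable_sq.div_const M
  have h1 : ∫ T, |W Q Y N T| ∂(Measure.pi fun _ : Fin N => Q) ≤
      ∫ T, (min |W Q Y N T| M + W Q Y N T ^ 2 / M) ∂(Measure.pi fun _ : Fin N => Q) := by
    apply integral_mono hWi.abs (hmin.add hsq)
    intro T
    change |W Q Y N T| ≤ min |W Q Y N T| M + W Q Y N T ^ 2 / M
    rcases le_total |W Q Y N T| M with h | h
    · rw [min_eq_left h]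
      have : 0 ≤ W Q Y N T ^ 2 / M := by positivity
      linarith
    · have : |W Q Y N T| ≤ W Q Y N T ^ 2 / M := by
        rw [le_div_iff₀ hM, ← sq_abs]
        nlinarith [abs_nonneg (W Q Y N T)]
      have h3 : 0 ≤ min |W Q Y N T| M := by positivity
      linarith
  rw [integral_add hmin hsq, integral_div] at h1
  have h2 : (∫ T, W Q Y N T ^ 2 ∂(Measure.pi fun _ : Fin N => Q)) / M ≤ ε / 2 := by
    rw [div_le_iff₀ hM]
    have := int_W_sq Q hL N
    have h4 : ε / 2 * M = v + 1 := by rw [hMdef]; field_simp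
    linarith
  linarith

end

/-- the density -/
noncomputable def r (t : ℝ) : ℝ := 1 + 2 * Real.cos ((1 / 3) * Real.arccos (2 * t - 1)
        + 4 * Real.pi / 3)

lemma r_cont : Continuous r := by
  unfold r
  have := Real.continuous_arccos
  fun_prop

lemma r_eq (t : ℝ) : r t = 1 + 2 * Real.cos ((2 * Real.pi - Real.arccos (2 * t - 1)) / 3) := by
  unfold r
  rw [← Real.cos_neg, ← Real.cos_add_two_pi]
  ring_nf

lemma cos_two_pi_div_three : Real.cos (2 * Real.pi / 3) = -1/2 := by
  rw [show 2 * Real.pi / 3 = 2 * (Real.pi / 3) by ring, Real.cos_two_mul, Real.cos_pi_div_three]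
  norm_num

lemma r_zero : r 0 = 2 := by
  rw [r_eq]
  norm_num
  rw [show (2 * Real.pi - Real.pi) / 3 = Real.pi / 3 by ring, Real.cos_pi_div_three]
  norm_num

lemma r_one : r 1 = 0 := by
  rw [r_eq]
  norm_num
  rw [cos_two_pi_div_three]
  norm_num

lemma r_nonneg (t : ℝ) : 0 ≤ r t := by
  rw [r_eq]
  have h0 := Real.arccos_nonneg (2 * t - 1)
  have h1 := Real.arccos_le_pi (2 * t - 1)
  have := Real.cos_le_cos_of_nonneg_of_le_pi (x := (2 * Real.pi - Real.arccos (2 * t - 1)) / 3)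
    (y := 2 * Real.pi / 3) (by linarith) (by linarith [Real.pi_pos]) (by linarith)
  rw [cos_two_pi_div_three] at this
  linarith

lemma r_le_two (t : ℝ) : r t ≤ 2 := by
  rw [r_eq]
  have h0 := Real.arccos_nonneg (2 * t - 1)
  have h1 := Real.arccos_le_pi (2 * t - 1)
  have := Real.cos_le_cos_of_nonneg_of_le_pi (x := Real.pi / 3)
    (y := (2 * Real.pi - Real.arccos (2 * t - 1)) / 3)
    (by linarith [Real.pi_pos]) (by linarith [Real.pi_pos]) (by linarith)
  rw [Real.cos_pi_div_three] at this
  linarith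

lemma r_pos {t : ℝ} (ht : t < 1) : 0 < r t := by
  rw [r_eq]
  have h0 : 0 < Real.arccos (2 * t - 1) := Real.arccos_pos.2 (by linarith)
  have h1 := Real.arccos_le_pi (2 * t - 1)
  have := Real.cos_lt_cos_of_nonneg_of_le_pi (x := (2 * Real.pi - Real.arccos (2 * t - 1)) / 3)
    (y := 2 * Real.pi / 3) (by linarith) (by linarith [Real.pi_pos]) (by linarith)
  rw [cos_two_pi_div_three] at this
  linarith

lemma r_lt_two {t : ℝ} (ht : 0 < t) : r t < 2 := by
  rw [r_eq]
  have h0 := Real.arccos_nonneg (2 * t - 1)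
  have h1 : Real.arccos (2 * t - 1) < Real.pi := by
    refine lt_of_le_of_ne (Real.arccos_le_pi _) ?_
    rw [Ne, Real.arccos_eq_pi]; linarith
  have := Real.cos_lt_cos_of_nonneg_of_le_pi (x := Real.pi / 3)
    (y := (2 * Real.pi - Real.arccos (2 * t - 1)) / 3)
    (by linarith [Real.pi_pos]) (by linarith [Real.pi_pos]) (by linarith)
  rw [Real.cos_pi_div_three] at this
  linarith

lemma r_deriv {t : ℝ} (h0 : 0 < t) (h1 : t < 1) :
    HasDerivAt r (4 / (3 * (r t * (r t - 2)))) t := by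
  have hp := r_pos h1
  have hl := r_lt_two h0
  have ha : HasDerivAt Real.arccos _ (2 * t - 1) := Real.hasDerivAt_arccos (by linarith) (by linarith)
  have hb : HasDerivAt (fun t : ℝ => 2 * t - 1) 2 t := by
    simpa using ((hasDerivAt_id t).const_mul 2).sub_const 1
  have hc := ha.comp t hb
  have hd := ((((hc.const_sub (2 * Real.pi)).div_const 3).cos).const_mul 2).const_add 1
  have he : HasDerivAt r _ t := hd.congr_of_eventuallyEq (Eventually.of_forall fun s => by
    simpa using r_eq s)
  convert he using 1
  simp only [Function.comp]
  set th := Real.arccos (2 * t - 1) with hth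
  set ψ := (2 * Real.pi - th) / 3 with hψ
  have hr : r t = 1 + 2 * Real.cos ψ := r_eq t
  have hs : √(1 - (2 * t - 1) ^ 2) = Real.sin ψ * (1 - 4 * Real.cos ψ ^ 2) := by
    rw [← Real.sin_arccos, ← hth, show th = -(3 * ψ) + 2 * Real.pi by rw [hψ]; ring,
      Real.sin_add_two_pi, Real.sin_neg, Real.sin_three_mul]
    have := Real.sin_sq_add_cos_sq ψ
    have h2 : Real.sin ψ ^ 3 = Real.sin ψ * (1 - Real.cos ψ ^ 2) := by rw [← this]; ring
    rw [h2]; ring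
  have hspos : 0 < √(1 - (2 * t - 1) ^ 2) := Real.sqrt_pos.2 (by nlinarith)
  rw [hs] at hspos ⊢
  have hne : Real.sin ψ ≠ 0 := fun h => by simp [h] at hspos
  have hne2 : 1 - 4 * Real.cos ψ ^ 2 ≠ 0 := fun h => by simp [h] at hspos
  have hrr : r t * (r t - 2) = -(1 - 4 * Real.cos ψ ^ 2) := by rw [hr]; ring
  rw [hrr]
  field_simp
  ring

lemma int_inv {x : ℝ} (h0 : 0 ≤ x) (h1 : x ≤ 1) :
    IntegrableOn (fun t => 1 / r t) (Set.Ioc 0 x) ∧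
    ∫ t in Set.Ioc 0 x, 1 / r t = 3 / 8 * (2 - r x) ^ 2 := by
  have hc : ContinuousOn (fun t => 3 / 8 * (2 - r t) ^ 2) (Set.Icc 0 x) := by
    have := r_cont
    fun_prop
  have hd : ∀ t ∈ Set.Ioo 0 x, HasDerivAt (fun t => 3 / 8 * (2 - r t) ^ 2) (1 / r t) t := by
    intro t ht
    have hp := r_pos (ht.2.trans_le h1)
    have hl := r_lt_two ht.1
    convert! (((r_deriv ht.1 (ht.2.trans_le h1)).const_sub 2).pow 2).const_mul (3/8) using 1
    have : r t - 2 ≠ 0 := by linarith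
    have h3 : r t ≠ 0 := hp.ne'
    field_simp
    ring
  have hi : IntegrableOn (fun t => 1 / r t) (Set.Ioc 0 x) :=
    intervalIntegral.integrableOn_deriv_of_nonneg hc hd
    (fun t ht => one_div_nonneg.2 (r_nonneg t))
  refine ⟨hi, ?_⟩
  have := intervalIntegral.integral_eq_sub_of_hasDerivAt_of_le h0 hc hd
    ((intervalIntegrable_iff_integrableOn_Ioc_of_le h0).2 hi)
  rw [intervalIntegral.integral_of_le h0] at this
  rw [this, r_zero]
  ring

lemma int_r : ∫ t in Set.Icc (0:ℝ) 1, r t = 1 := by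
  rw [integral_Icc_eq_integral_Ioc, ← intervalIntegral.integral_of_le zero_le_one]
  rw [intervalIntegral.integral_eq_sub_of_hasDerivAt_of_le zero_le_one
    (f := fun t => (3 * r t ^ 4 / 4 - 2 * r t ^ 3) / 4)]
  · rw [r_one, r_zero]; norm_num
  · have := r_cont
    fun_prop
  · intro t ht
    have hp := r_pos ht.2
    have hl := r_lt_two ht.1
    have hd := r_deriv ht.1 ht.2
    convert! (((((hd.pow 4).const_mul 3).div_const 4).sub ((hd.pow 3).const_mul 2)).div_const 4) using 1
    have : r t - 2 ≠ 0 := by linarith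
    have h3 : r t ≠ 0 := hp.ne'
    field_simp
    ring
  · exact r_cont.intervalIntegrable _ _

lemma int_two_sub_r : ∫ t in Set.Icc (0:ℝ) 1, √(3 / 8 * (2 - r t) ^ 2) = √(3 / 8) := by
  have : ∀ t, √(3 / 8 * (2 - r t) ^ 2) = √(3 / 8) * (2 - r t) := by
    intro t
    rw [Real.sqrt_mul (by norm_num), Real.sqrt_sq (by linarith [r_le_two t])]
  simp_rw [this]
  rw [integral_const_mul, integral_sub (by simp) r_cont.integrableOn_Icc, int_r]
  norm_num

/-- Lebesgue on unit interval -/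
noncomputable def lam : Measure ℝ := volume.restrict (Set.Icc 0 1)

instance : IsProbabilityMeasure lam := ⟨by simp [lam]⟩

instance : NullSingletonClass lam := by unfold lam; infer_instance

/-- sampling measure -/
noncomputable def nu : Measure ℝ := lam.withDensity fun t => ENNReal.ofReal (r t)

lemma meas_ofReal_r : Measurable fun t => ENNReal.ofReal (r t) :=
  r_cont.measurable.ennreal_ofReal

instance : IsProbabilityMeasure nu := ⟨by
  rw [nu, withDensity_apply _ MeasurableSet.univ, Measure.restrict_univ,
    ← ofReal_integral_eq_lintegral_ofReal]
  · rw [lam, int_r]; simp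
  · exact r_cont.integrableOn_Icc
  · exact Eventually.of_forall r_nonneg⟩

/-- one-dim weight -/
noncomputable def y (x t : ℝ) : ℝ := 1 / r t * (if t < x then 1 else 0)

lemma y_meas (x : ℝ) : Measurable (y x) := by
  unfold y
  have := r_cont.measurable
  exact (by fun_prop : Measurable fun t => 1 / r t).mul
    (Measurable.ite measurableSet_Iio measurable_const measurable_const)

lemma ae_lam_lt {x : ℝ} (h0 : 0 ≤ x) (h1 : x ≤ 1) (f : ℝ → ℝ) :
    (fun t => if t < x then f t else 0) =ᵐ[lam] (Set.Ioc 0 x).indicator f := by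
  have hx : ∀ᵐ t ∂lam, t ≠ x := Measure.ae_ne _ _
  have hz : ∀ᵐ t ∂lam, t ≠ 0 := Measure.ae_ne _ _
  have hm : ∀ᵐ t ∂lam, t ∈ Set.Icc (0:ℝ) 1 := ae_restrict_mem measurableSet_Icc
  filter_upwards [hx, hz, hm] with t h2 h3 h4
  have h5 : 0 < t := lt_of_le_of_ne h4.1 h3.symm
  by_cases h : t < x
  · simp [h, h.le, h5]
  · have : ¬ t ≤ x := fun h' => h (lt_of_le_of_ne h' h2)
    simp [h, this]

lemma ind_int {x : ℝ} (h0 : 0 ≤ x) (h1 : x ≤ 1) {f : ℝ → ℝ} (hf : IntegrableOn f (Set.Ioc 0 x)) :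
    Integrable (fun t => if t < x then f t else 0) lam ∧
    ∫ t, (if t < x then f t else 0) ∂lam = ∫ t in Set.Ioc 0 x, f t := by
  have hsub : Set.Ioc 0 x ∩ Set.Icc 0 1 = Set.Ioc 0 x :=
    Set.inter_eq_left.2 fun t ht => ⟨ht.1.le, ht.2.trans h1⟩
  constructor
  · rw [integrable_congr (ae_lam_lt h0 h1 f), integrable_indicator_iff measurableSet_Ioc,
      IntegrableOn, lam, Measure.restrict_restrict measurableSet_Ioc, hsub]
    exact hf
  · rw [integral_congr_ae (ae_lam_lt h0 h1 f), integral_indicator measurableSet_Ioc,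
      lam, Measure.restrict_restrict measurableSet_Ioc, hsub]

lemma nu_int (f : ℝ → ℝ) : ∫ t, f t ∂nu = ∫ t, r t * f t ∂lam := by
  rw [nu, integral_withDensity_eq_integral_toReal_smul meas_ofReal_r (by simp)]
  simp [ENNReal.toReal_ofReal (r_nonneg _)]

lemma nu_integrable (f : ℝ → ℝ) : Integrable f nu ↔ Integrable (fun t => r t * f t) lam := by
  rw [nu, integrable_withDensity_iff_integrable_smul' meas_ofReal_r (by simp)]
  simp [ENNReal.toReal_ofReal (r_nonneg _)]

lemma y_mean {x : ℝ} (h0 : 0 ≤ x) (h1 : x ≤ 1) :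
    Integrable (y x) nu ∧ ∫ t, y x t ∂nu = x := by
  have h : (fun t => r t * y x t) = fun t => if t < x then (1:ℝ) else 0 := by
    funext t
    unfold y
    by_cases ht : t < x
    · have := (r_pos (ht.trans_le h1)).ne'
      simp [ht, this]
    · simp [ht]
  rw [nu_integrable, nu_int, h]
  have := ind_int h0 h1 (f := fun _ => 1) (by simp)
  refine ⟨this.1, this.2.trans ?_⟩
  simp [h0]

lemma y_sq {x : ℝ} (h0 : 0 ≤ x) (h1 : x ≤ 1) :
    Integrable (fun t => y x t ^ 2) nu ∧ ∫ t, y x t ^ 2 ∂nu = 3 / 8 * (2 - r x) ^ 2 := by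
  have h : (fun t => r t * y x t ^ 2) = fun t => if t < x then 1 / r t else 0 := by
    funext t
    unfold y
    by_cases ht : t < x
    · have := (r_pos (ht.trans_le h1)).ne'
      simp [ht]
      field_simp
    · simp [ht]
  rw [nu_integrable, nu_int, h]
  have hi := int_inv h0 h1
  have := ind_int h0 h1 hi.1
  exact ⟨this.1, this.2.trans hi.2⟩

lemma pi_withDensity {ι E : Type*} [Fintype ι] [MeasurableSpace E] (μ : Measure E)
    [IsProbabilityMeasure μ] (f : E → ENNReal) (hf : Measurable f)
    [IsProbabilityMeasure (μ.withDensity f)] :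
    (Measure.pi fun _ : ι => μ.withDensity f) =
      (Measure.pi fun _ : ι => μ).withDensity fun x => ∏ i, f (x i) := by
  apply Measure.pi_eq
  intro s hs
  rw [withDensity_apply _ (MeasurableSet.univ_pi hs), ← lintegral_indicator (MeasurableSet.univ_pi hs)]
  have h : ∀ x : ι → E, (Set.univ.pi s).indicator (fun x => ∏ i, f (x i)) x =
      ∏ i, (s i).indicator f (x i) := by
    classical
    intro x
    by_cases hx : x ∈ Set.univ.pi s
    · rw [Set.indicator_of_mem hx]
      exact Finset.prod_congr rfl fun i _ => (Set.indicator_of_mem (hx i trivial) f).symm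
    · rw [Set.indicator_of_notMem hx]
      simp only [Set.mem_pi, not_forall] at hx
      obtain ⟨i, _, hi⟩ := hx
      exact (Finset.prod_eq_zero (Finset.mem_univ i) (Set.indicator_of_notMem hi f)).symm
  simp_rw [h]
  rw [ProbabilityTheory.lintegral_prod_eq_prod_lintegral_of_indepFun Finset.univ
    (fun i (x : ι → E) => (s i).indicator f (x i))]
  · refine Finset.prod_congr rfl fun i _ => ?_
    rw [withDensity_apply _ (hs i), ← lintegral_indicator (hs i)]
    have := measurePreserving_eval (fun _ : ι => μ) i
    rw [← this.lintegral_comp (hf.indicator (hs i))]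
  · exact ProbabilityTheory.iIndepFun_pi (X := fun i => (s i).indicator f)
      fun i => (hf.indicator (hs i)).aemeasurable
  · exact fun i => (hf.indicator (hs i)).comp (measurable_pi_apply i)


section main
open ProbabilityTheory

lemma restrict_pi_Icc (d : ℕ) :
    (volume : Measure (Fin d → ℝ)).restrict (Set.Icc 0 1) = Measure.pi fun _ : Fin d => lam := by
  rw [← Set.pi_univ_Icc, volume_pi, Measure.restrict_pi_pi]
  rfl

lemma restrict_pi_pi_Icc (N d : ℕ) :
    (volume : Measure (Fin N → Fin d → ℝ)).restrict (Set.Icc 0 1) =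
      Measure.pi fun _ : Fin N => Measure.pi fun _ : Fin d => lam := by
  rw [← Set.pi_univ_Icc, volume_pi, Measure.restrict_pi_pi]
  simp only [Pi.zero_apply, Pi.one_apply, restrict_pi_Icc]

/-- sampling measure in dimension d -/
noncomputable def Q (d : ℕ) : Measure (Fin d → ℝ) := Measure.pi fun _ : Fin d => nu

instance (d : ℕ) : IsProbabilityMeasure (Q d) := by unfold Q; infer_instance

lemma Q_eq (d : ℕ) : Q d = (Measure.pi fun _ : Fin d => lam).withDensity
    fun t => ∏ j, ENNReal.ofReal (r (t j)) := by
  have : IsProbabilityMeasure (lam.withDensity fun t => ENNReal.ofReal (r t)) :=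
    inferInstanceAs (IsProbabilityMeasure nu)
  exact pi_withDensity lam _ meas_ofReal_r

lemma meas_prod (d : ℕ) : Measurable fun t : Fin d → ℝ => ∏ j, ENNReal.ofReal (r (t j)) :=
  Finset.measurable_prod _ fun j _ => meas_ofReal_r.comp (measurable_pi_apply j)

lemma piQ_eq (N d : ℕ) : (Measure.pi fun _ : Fin N => Q d) =
    (Measure.pi fun _ : Fin N => Measure.pi fun _ : Fin d => lam).withDensity
    fun T => ∏ k, ∏ j, ENNReal.ofReal (r (T k j)) := by
  have : IsProbabilityMeasure ((Measure.pi fun _ : Fin d => lam).withDensity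
    fun t => ∏ j, ENNReal.ofReal (r (t j))) := by rw [← Q_eq]; infer_instance
  have h := pi_withDensity (ι := Fin N) (Measure.pi fun _ : Fin d => lam) _ (meas_prod d)
  rw [← h, ← Q_eq]

lemma int_piQ (N d : ℕ) (F : (Fin N → Fin d → ℝ) → ℝ) :
    ∫ T in Set.Icc (0 : Fin N → Fin d → ℝ) 1, (∏ k, ∏ j, r (T k j)) * F T =
      ∫ T, F T ∂(Measure.pi fun _ : Fin N => Q d) := by
  rw [restrict_pi_pi_Icc, piQ_eq, integral_withDensity_eq_integral_toReal_smul]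
  · simp [ENNReal.toReal_prod, ENNReal.toReal_ofReal (r_nonneg _)]
  · exact Finset.measurable_prod _ fun k _ => (meas_prod d).comp (measurable_pi_apply k)
  · exact Eventually.of_forall fun T =>
      ENNReal.prod_lt_top fun k _ => ENNReal.prod_lt_top fun j _ => ENNReal.ofReal_lt_top

/-- d-dim weight -/
noncomputable def Yd {d : ℕ} (x t : Fin d → ℝ) : ℝ := ∏ j, y (x j) (t j)

lemma Yd_eq {d : ℕ} (x t : Fin d → ℝ) :
    Yd x t = 1 / (∏ j, r (t j)) * (if ∀ j, t j < x j then (1 : ℝ) else 0) := by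
  unfold Yd y
  rw [Finset.prod_mul_distrib, Finset.prod_div_distrib, Finset.prod_const_one]
  congr 1
  rw [Finset.prod_ite_zero]
  simp

lemma Yd_measc {d : ℕ} {α : Type*} [MeasurableSpace α] {f g : α → Fin d → ℝ}
    (hf : Measurable f) (hg : Measurable g) : Measurable fun a => Yd (f a) (g a) := by
  unfold Yd y
  have := r_cont.measurable
  refine Finset.measurable_prod _ fun j _ => Measurable.mul (by fun_prop) ?_
  exact Measurable.ite (measurableSet_lt (by fun_prop) (by fun_prop)) measurable_const
    measurable_const

lemma Yd_meas {d : ℕ} (x : Fin d → ℝ) : Measurable (Yd x) :=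
  Yd_measc measurable_const measurable_id

/-- dominating function -/
noncomputable def sg {d : ℕ} (x : Fin d → ℝ) : ℝ := ∏ j, √(3 / 8 * (2 - r (x j)) ^ 2)

lemma sg_nonneg {d : ℕ} (x : Fin d → ℝ) : 0 ≤ sg x :=
  Finset.prod_nonneg fun _ _ => Real.sqrt_nonneg _

lemma sg_cont {d : ℕ} : Continuous (sg (d := d)) := by
  unfold sg
  have := r_cont
  fun_prop

lemma sg_int (d : ℕ) : Integrable (sg (d := d)) (Measure.pi fun _ : Fin d => lam) := by
  rw [← restrict_pi_Icc]
  exact sg_cont.integrableOn_Icc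

lemma sg_integral (d : ℕ) : ∫ x, sg x ∂(Measure.pi fun _ : Fin d => lam) = √(3 / 8) ^ d := by
  unfold sg
  rw [integral_fintype_prod_eq_pow (fun t => √(3 / 8 * (2 - r t) ^ 2)), lam, int_two_sub_r]
  simp

lemma Yd_facts {d : ℕ} {x : Fin d → ℝ} (hx : x ∈ Set.Icc (0 : Fin d → ℝ) 1) :
    MemLp (Yd x) 2 (Q d) ∧ ∫ t, Yd x t ∂(Q d) = ∏ j, x j ∧ √Var[Yd x; Q d] ≤ sg x := by
  have h0 : ∀ j, 0 ≤ x j := fun j => hx.1 j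
  have h1 : ∀ j, x j ≤ 1 := fun j => hx.2 j
  have hsq : (fun t => Yd x t ^ 2) = fun t => ∏ j, y (x j) (t j) ^ 2 := by
    funext t; simp [Yd, Finset.prod_pow]
  have hL : MemLp (Yd x) 2 (Q d) := by
    rw [memLp_two_iff_integrable_sq (Yd_meas x).aestronglyMeasurable, hsq]
    exact Integrable.fintype_prod (f := fun j t => y (x j) t ^ 2) fun j => (y_sq (h0 j) (h1 j)).1
  refine ⟨hL, ?_, ?_⟩
  · unfold Yd Q
    rw [integral_fintype_prod_eq_prod (fun j t => y (x j) t)]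
    exact Finset.prod_congr rfl fun j _ => (y_mean (h0 j) (h1 j)).2
  · apply Real.sqrt_le_iff.2 ⟨sg_nonneg x, ?_⟩
    rw [variance_eq_sub hL]
    have : ∫ t, (Yd x ^ 2) t ∂(Q d) = sg x ^ 2 := by
      simp only [Pi.pow_apply]
      rw [hsq, Q, integral_fintype_prod_eq_prod (fun j t => y (x j) t ^ 2), sg, ← Finset.prod_pow]
      refine Finset.prod_congr rfl fun j _ => ?_
      rw [(y_sq (h0 j) (h1 j)).2, Real.sq_sqrt (by positivity)]
    rw [this]
    nlinarith [sq_nonneg (∫ t, Yd x t ∂(Q d))]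

/-- normalised discrepancy -/
noncomputable def D {d : ℕ} (N : ℕ) (x : Fin d → ℝ) (T : Fin N → Fin d → ℝ) : ℝ :=
  (√N)⁻¹ * (∑ k, Yd x (T k) - N * ∏ j, x j)

lemma D_eq {d : ℕ} (N : ℕ) {x : Fin d → ℝ} (hx : x ∈ Set.Icc (0 : Fin d → ℝ) 1) :
    D N x = W (Q d) (Yd x) N := by
  funext T
  rw [D, W, (Yd_facts hx).2.1]

lemma D_meas {d : ℕ} (N : ℕ) :
    Measurable fun p : (Fin d → ℝ) × (Fin N → Fin d → ℝ) => D N p.1 p.2 := by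
  unfold D
  refine Measurable.const_mul (Measurable.sub ?_ ?_) _
  · exact Finset.measurable_sum _ fun k _ =>
      Yd_measc measurable_fst ((measurable_pi_apply k).comp measurable_snd)
  · fun_prop

lemma D_disc {d : ℕ} {N : ℕ} (hN : 0 < N) (x : Fin d → ℝ) (T : Fin N → Fin d → ℝ) :
    |(∑ k, (1 / (N * ∏ j, r (T k j))) *
                    (if ∀ j, T k j < x j then (1 : ℝ) else 0)) - ∏ j, x j| =
      (√N)⁻¹ * |D N x T| := by
  have hN' : (0:ℝ) < N := by exact_mod_cast hN
  have hs : 0 < √(N:ℝ) := Real.sqrt_pos.2 hN'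
  rw [D, ← abs_of_pos (inv_pos.2 hs), abs_mul, abs_abs, ← abs_mul, ← abs_mul, ← mul_assoc,
    ← mul_inv, Real.mul_self_sqrt hN'.le, mul_sub, Finset.mul_sum]
  congr 2
  · refine Finset.sum_congr rfl fun k _ => ?_
    rw [Yd_eq, one_div_mul_eq_div]
    field_simp
  · field_simp

/-- mean of abs -/
noncomputable def g (d N : ℕ) (x : Fin d → ℝ) : ℝ :=
  ∫ T, |D N x T| ∂(Measure.pi fun _ : Fin N => Q d)

lemma g_nonneg (d N : ℕ) (x : Fin d → ℝ) : 0 ≤ g d N x := integral_nonneg fun _ => abs_nonneg _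

lemma g_meas (d N : ℕ) : StronglyMeasurable (g d N) :=
  StronglyMeasurable.integral_prod_right (f := fun x T => |D N x T|)
    (by exact (continuous_abs.measurable.comp (D_meas N)).stronglyMeasurable)

lemma g_le {d N : ℕ} {x : Fin d → ℝ} (hx : x ∈ Set.Icc (0 : Fin d → ℝ) 1) : g d N x ≤ sg x := by
  obtain ⟨hL, -, hv⟩ := Yd_facts hx
  rw [g, D_eq N hx]
  exact (int_abs_W_le (Q d) hL N).trans hv

lemma ae_mem (d : ℕ) : ∀ᵐ x ∂(Measure.pi fun _ : Fin d => lam), x ∈ Set.Icc (0 : Fin d → ℝ) 1 := by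
  rw [← restrict_pi_Icc]
  exact ae_restrict_mem measurableSet_Icc

lemma g_int (d N : ℕ) : Integrable (g d N) (Measure.pi fun _ : Fin d => lam) := by
  refine (sg_int d).mono' (g_meas d N).aestronglyMeasurable ?_
  filter_upwards [ae_mem d] with x hx
  rw [Real.norm_of_nonneg (g_nonneg _ _ _)]
  exact g_le hx

lemma D_integrable (d N : ℕ) : Integrable
    (fun p : (Fin d → ℝ) × (Fin N → Fin d → ℝ) => |D N p.1 p.2|)
    ((Measure.pi fun _ : Fin d => lam).prod (Measure.pi fun _ : Fin N => Q d)) := by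
  have hm : Measurable (fun p : (Fin d → ℝ) × (Fin N → Fin d → ℝ) => |D N p.1 p.2|) :=
    continuous_abs.measurable.comp (D_meas N)
  rw [integrable_prod_iff hm.aestronglyMeasurable]
  constructor
  · filter_upwards [ae_mem d] with x hx
    change Integrable (fun T => |D N x T|) _
    rw [D_eq N hx]
    exact ((memLp_W (Q d) (Yd_facts hx).1 N).integrable (by norm_num)).abs
  · simp only [Real.norm_eq_abs, abs_abs]
    exact g_int d N

lemma seq_eq (d : ℕ) {N : ℕ} (hN : 0 < N) :
    (N : ℝ) ^ ((1 : ℝ) / 2) * 2 ^ d *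
          ∫ T in Set.Icc (0 : Fin N → Fin d → ℝ) 1,
            (∏ k, ∏ j, r (T k j)) *
              ∫ x in Set.Icc (0 : Fin d → ℝ) 1,
                |(∑ k, (1 / (N * ∏ j, r (T k j))) *
                    (if ∀ j, T k j < x j then (1 : ℝ) else 0)) - ∏ j, x j| =
      2 ^ d * ∫ x, g d N x ∂(Measure.pi fun _ : Fin d => lam) := by
  have hs : 0 < √(N:ℝ) := Real.sqrt_pos.2 (by exact_mod_cast hN)
  rw [int_piQ N d (fun T => ∫ x in Set.Icc (0 : Fin d → ℝ) 1,
                |(∑ k, (1 / (N * ∏ j, r (T k j))) *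
                    (if ∀ j, T k j < x j then (1 : ℝ) else 0)) - ∏ j, x j|)]
  simp_rw [D_disc hN, integral_const_mul, restrict_pi_Icc]
  rw [← integral_integral_swap (f := fun x T => |D N x T|) (D_integrable d N),
    ← Real.sqrt_eq_rpow]
  unfold g
  field_simp

lemma ev_bound (d : ℕ) {ε : ℝ} (hε : 0 < ε) : ∀ᶠ N in atTop,
    ∫ x, g d N x ∂(Measure.pi fun _ : Fin d => lam) ≤ √(2 / Real.pi) * √(3 / 8) ^ d + ε := by
  set c := √(2 / Real.pi) with hc
  have hc0 : 0 ≤ c := Real.sqrt_nonneg _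
  let p : ℕ → (Fin d → ℝ) → ℝ := fun N x => max (g d N x - c * sg x) 0
  have hpm : ∀ N, AEStronglyMeasurable (p N) (Measure.pi fun _ : Fin d => lam) := fun N =>
    (((g_meas d N).sub (sg_cont.stronglyMeasurable.const_mul c)).sup
      stronglyMeasurable_const).aestronglyMeasurable
  have hpb : ∀ N, ∀ᵐ x ∂(Measure.pi fun _ : Fin d => lam), ‖p N x‖ ≤ sg x := by
    intro N
    filter_upwards [ae_mem d] with x hx
    rw [Real.norm_of_nonneg (le_max_right _ _)]
    have := mul_nonneg hc0 (sg_nonneg x)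
    exact max_le (by linarith [g_le (N := N) hx]) (sg_nonneg x)
  have hlim : Tendsto (fun N => ∫ x, p N x ∂(Measure.pi fun _ : Fin d => lam)) atTop
      (nhds (∫ _, (0:ℝ) ∂(Measure.pi fun _ : Fin d => lam))) := by
    apply tendsto_integral_of_dominated_convergence sg hpm (sg_int d) hpb
    filter_upwards [ae_mem d] with x hx
    obtain ⟨hL, -, hv⟩ := Yd_facts hx
    rw [Metric.tendsto_nhds]
    intro δ hδ
    filter_upwards [limsup_W (Q d) (Yd_meas x) hL (half_pos hδ)] with N hN
    rw [← D_eq N hx] at hN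
    change g d N x ≤ _ at hN
    have h2 := mul_le_mul_of_nonneg_left hv hc0
    rw [Real.dist_0_eq_abs, abs_of_nonneg (le_max_right _ _)]
    exact max_lt (by linarith) hδ
  rw [integral_zero] at hlim
  filter_upwards [hlim.eventually_lt_const hε] with N hN
  have hpi : Integrable (p N) (Measure.pi fun _ : Fin d => lam) :=
    (sg_int d).mono' (hpm N) (hpb N)
  calc ∫ x, g d N x ∂(Measure.pi fun _ : Fin d => lam)
      ≤ ∫ x, (c * sg x + p N x) ∂(Measure.pi fun _ : Fin d => lam) := by
        apply integral_mono (g_int d N) (((sg_int d).const_mul c).add hpi)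
        intro x
        change g d N x ≤ c * sg x + max (g d N x - c * sg x) 0
        linarith [le_max_left (g d N x - c * sg x) 0]
    _ = c * √(3 / 8) ^ d + ∫ x, p N x ∂(Measure.pi fun _ : Fin d => lam) := by
        rw [integral_add ((sg_int d).const_mul c) hpi, integral_const_mul, sg_integral]
    _ ≤ _ := by linarith

lemma const_eq (d : ℕ) : (2:ℝ) ^ d * √(3 / 8) ^ d = (3 / 2 : ℝ) ^ ((d : ℝ) / 2) := by
  have h : 2 * √(3 / 8 : ℝ) = √(3 / 2) := by
    rw [show (3/2:ℝ) = 2 ^ 2 * (3 / 8) by norm_num, Real.sqrt_mul (by norm_num),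
      Real.sqrt_sq (by norm_num)]
  rw [← mul_pow, h, Real.sqrt_eq_rpow, ← Real.rpow_natCast, ← Real.rpow_mul (by norm_num)]
  ring_nf

end main
end LD

open MeasureTheory Filter

/-- For the optimal density for `p = 1`,
`ρ*(t) = 1 + 2cos((1/3)arccos(2t-1) + 4π/3)`, and i.i.d. points from the
product density with weights `a_k = 1/(N ρ_d*(t_k))`,
`limsup_N N^{1/2} 2^d E[∫|Δ|] ≤ √(2/π) (3/2)^{d/2}`. -/
theorem limsup_normalized_average_L1_discrepancy_optimal
    (d : ℕ)
    (ρstar : ℝ → ℝ)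
    (hρ : ∀ t, ρstar t = 1 + 2 * Real.cos ((1 / 3) * Real.arccos (2 * t - 1)
        + 4 * Real.pi / 3)) :
    Filter.limsup
      (fun N : ℕ =>
        (N : ℝ) ^ ((1 : ℝ) / 2) * 2 ^ d *
          ∫ T in Set.Icc (0 : Fin N → Fin d → ℝ) 1,
            (∏ k, ∏ j, ρstar (T k j)) *
              ∫ x in Set.Icc (0 : Fin d → ℝ) 1,
                |(∑ k, (1 / (N * ∏ j, ρstar (T k j))) *
                    (if ∀ j, T k j < x j then (1 : ℝ) else 0)) - ∏ j, x j|)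
      atTop
      ≤ Real.sqrt (2 / Real.pi) * (3 / 2 : ℝ) ^ ((d : ℝ) / 2) := by
  obtain rfl : ρstar = LD.r := funext hρ
  refine le_of_forall_pos_le_add fun ε hε => ?_
  apply limsup_le_of_le
  · refine IsBoundedUnder.isCoboundedUnder_le (isBoundedUnder_of_eventually_ge (a := 0) ?_)
    filter_upwards [eventually_gt_atTop 0] with N hN
    rw [LD.seq_eq d hN]
    exact mul_nonneg (by positivity) (integral_nonneg fun x => LD.g_nonneg d N x)
  · filter_upwards [eventually_gt_atTop 0, LD.ev_bound d (ε := ε / 2 ^ d) (by positivity)]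
      with N hN h
    rw [LD.seq_eq d hN, ← LD.const_eq]
    refine (mul_le_mul_of_nonneg_left h (by positivity)).trans (le_of_eq ?_)
    field_simp
end

section
/- For every p ∈ [1,∞) one has ((p+2)/(p+1))^{1/2} < ((2p+2)/(p+2))^{1/p}; that is, the base α_new(p) = ((p+2)/(p+1))^{1/2} obtained from optimally chosen product sampling densities is strictly smaller than the base α_old(p) = ((2p+2)/(p+2))^{1/p} obtained from uniform sampling. -/
/-- For every `p ∈ [1,∞)` the base from optimal product sampling,
`α_new(p) = ((p+2)/(p+1))^{1/2}`, is strictly smaller than the base from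
uniform sampling, `α_old(p) = ((2p+2)/(p+2))^{1/p}`. -/
theorem alpha_new_lt_alpha_old (p : ℝ) (hp : 1 ≤ p) :
    ((p + 2) / (p + 1)) ^ ((1 : ℝ) / 2) < ((2 * p + 2) / (p + 2)) ^ (1 / p) := by
  have hu : 0 < (p + 2) / (p + 1) := by positivity
  have hv : 0 < (2 * p + 2) / (p + 2) := by positivity
  have hv2 : (2 * p + 2) / (p + 2) = 2 / ((p + 2) / (p + 1)) := by field_simp
  have h1 : 1 ≤ (p + 2) / (p + 1) := by
    rw [le_div_iff₀ (by linarith)]; linarith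
  have h2 := Real.self_le_sinh_iff.2 (Real.log_nonneg h1)
  rw [Real.sinh_log hu] at h2
  have h3 : (p + 2) / 2 * Real.log ((p + 2) / (p + 1)) ≤ 5 / 8 := by
    calc _ ≤ (p + 2) / 2 * (((p + 2) / (p + 1) - ((p + 2) / (p + 1))⁻¹) / 2) := by gcongr
      _ = (2 * p + 3) / (4 * (p + 1)) := by field_simp; ring
      _ ≤ 5 / 8 := by
        rw [div_le_div_iff₀ (by linarith) (by norm_num)]; linarith
  have h4 := Real.log_two_gt_d9
  rw [← Real.log_lt_log_iff (by positivity) (by positivity), Real.log_rpow hu, Real.log_rpow hv,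
    hv2, Real.log_div (by norm_num) hu.ne', one_div_mul_eq_div p, lt_div_iff₀ (by linarith)]
  linarith
end

section
/- The function F(a,t) = 1/3 − a(1−t²) + a²(1−t) on ℝ × [0,1] attains its global minimum value 1/27 at (a,t) = (2/3, 1/3). Moreover, the restriction F(1,t) = 1/3 − (1−t²) + (1−t) = t² − t + 1/3 attains its minimum value 1/12 over t ∈ [0,1] at t = 1/2. -/
/-- The squared worst-case error
`F(a,t) = 1/3 - a(1-t²) + a²(1-t)` of the one-point rule `f ↦ a f(t)` attains
its global minimum `1/27` at `(a,t) = (2/3, 1/3)`, and the restriction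
`F(1,t) = t² - t + 1/3` attains its minimum `1/12` over `t ∈ [0,1]` at
`t = 1/2`. -/
theorem one_point_rule_optimal
    (F : ℝ → ℝ → ℝ)
    (hF : ∀ a t, F a t = 1 / 3 - a * (1 - t ^ 2) + a ^ 2 * (1 - t)) :
    F (2 / 3) (1 / 3) = 1 / 27 ∧
    (∀ a : ℝ, ∀ t ∈ Set.Icc (0 : ℝ) 1, 1 / 27 ≤ F a t) ∧
    F 1 (1 / 2) = 1 / 12 ∧
    (∀ t ∈ Set.Icc (0 : ℝ) 1, F 1 t = t ^ 2 - t + 1 / 3 ∧ 1 / 12 ≤ F 1 t) := by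
  refine ⟨by rw [hF]; norm_num, ?_, by rw [hF]; norm_num, ?_⟩
  · rintro a t ⟨h0, h1⟩
    have e1 : 0 ≤ (1 - t) * (a - (1 + t) / 2) ^ 2 :=
      mul_nonneg (by linarith) (sq_nonneg _)
    have e2 : 0 ≤ (t + 5 / 3) * (t - 1 / 3) ^ 2 :=
      mul_nonneg (by linarith) (sq_nonneg _)
    rw [hF]
    linarith
  · rintro t -
    rw [hF]
    exact ⟨by ring, by linarith [sq_nonneg (t - 1 / 2)]⟩
end
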